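/- arXiv:2209.00418 — 2 statements merged into one kernel-verified Lean document; each statement's English description precedes it below -/
import Mathlib

section
/- Let δ be an increment function of size n and let P ≤ Q in the alt-Tamari poset Tam^δ_n. Then for every 1 ≤ i ≤ n one has h_i(Q) ≤ h_i(P) and ℓ_i(Q;δ) ≥ ℓ_i(P;δ). -/
/-!
Common definitions.  A letter of a word is a `Bool`: `true` is an up step `u`,
`false` is a down step `d`.  Positions in words are 0-based.
-/

/-- A (possibly empty) Dyck word: as many `u`'s as `d`'s, and every
prefix has at least as many `u`'s as `d`'s. -/
def IsDyckPath (w : List Bool) : Prop :=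
  w.count true = w.count false ∧ ∀ p, p <+: w → p.count false ≤ p.count true

/-- A Dyck word of size `n`: `n` up steps, `n` down steps, every prefix has
at least as many `u`'s as `d`'s. -/
def IsDyckWord (n : ℕ) (w : List Bool) : Prop :=
  w.count true = n ∧ w.count false = n ∧ ∀ p, p <+: w → p.count false ≤ p.count true

/-- The set of Dyck words of size `n`. -/
def DyckSet (n : ℕ) : Set (List Bool) := {w | IsDyckWord n w}

/-- An increment function: a `{0,1}`-valued function (the paper's `δ : {1,…,n} → {0,1}`;
only the values on `{1,…,n}` are ever used). -/
def IsIncFun (δ : ℕ → ℤ) : Prop := ∀ i, δ i = 0 ∨ δ i = 1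

/-- The 0-based position in `w` of the `i`-th up step `u_i` (`i` is 1-based). -/
def upPos (w : List Bool) (i : ℕ) : ℕ :=
  ((List.range w.length).filter fun q => w.getD q false = true).getD (i - 1) 0

/-- `h_i(w)`: the (1-based, between 1 and 2n) position of the up step `u_i` in `w`. -/
def hpos (w : List Bool) (i : ℕ) : ℕ := upPos w i + 1

/-- The change of δ-altitude produced by the letter at position `q` of `w`:
the up step `u_i` contributes `δ i`, a down step contributes `-1`. -/
def stepVal (δ : ℕ → ℤ) (w : List Bool) (q : ℕ) : ℤ :=
  if w.getD q false = true then δ ((w.take (q + 1)).count true) else -1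

/-- The δ-elevation of the factor of `w` occupying positions `a, …, b-1`. -/
def elev (δ : ℕ → ℤ) (w : List Bool) (a b : ℕ) : ℤ :=
  ∑ q ∈ Finset.Ico a b, stepVal δ w q

/-- `C` is the δ-excursion of the up step of `w` at position `p`:
the smallest (nonempty) factor of `w` starting at `p` whose δ-elevation is `0`. -/
def IsDeltaExcAt (δ : ℕ → ℤ) (w : List Bool) (p : ℕ) (C : List Bool) : Prop :=
  w.getD p false = true ∧
  ∃ m, 0 < m ∧ p + m ≤ w.length ∧ C = (w.drop p).take m ∧
    elev δ w p (p + m) = 0 ∧ ∀ m', 0 < m' → m' < m → elev δ w p (p + m') ≠ 0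

/-- `C` is the excursion of the up step of `w` at position `p`: the smallest factor
of `w` starting at `p` that is itself a Dyck word. -/
def IsExcursionAt (w : List Bool) (p : ℕ) (C : List Bool) : Prop :=
  w.getD p false = true ∧
  ∃ m, 0 < m ∧ p + m ≤ w.length ∧ C = (w.drop p).take m ∧ IsDyckPath C ∧
    ∀ m', 0 < m' → m' < m → ¬ IsDyckPath ((w.drop p).take m')

/-- `ℓ_i(w; δ)`: the length of the δ-excursion of `u_i` in `w`. -/
noncomputable def excLen (δ : ℕ → ℤ) (w : List Bool) (i : ℕ) : ℕ :=
  sInf {m | 0 < m ∧ elev δ w (upPos w i) (upPos w i + m) = 0}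

/-- `Q` is the δ-rotation of `P` at some up step: `P = A d C B` with `d u_i` a valley
and `C` the δ-excursion of `u_i`, and `Q = A C d B`. -/
def DeltaRot (δ : ℕ → ℤ) (P Q : List Bool) : Prop :=
  ∃ A C B, P = A ++ false :: (C ++ B) ∧ Q = A ++ (C ++ false :: B) ∧
    IsDeltaExcAt δ P (A.length + 1) C

/-- The alt-Tamari order `Tam^δ`: reflexive transitive closure of δ-rotations. -/
def altLE (δ : ℕ → ℤ) : List Bool → List Bool → Prop :=
  Relation.ReflTransGen (DeltaRot δ)

/-- The Tamari order: the alt-Tamari order for `δ ≡ 1` (the δ-excursion of any up step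
is then its excursion). -/
def tamLE : List Bool → List Bool → Prop := altLE fun _ => 1

/-- The height (number of `u`'s minus number of `d`'s) of the length-`j` prefix of `w`. -/
def prefHeight (w : List Bool) (j : ℕ) : ℤ :=
  ((w.take j).count true : ℤ) - ((w.take j).count false : ℤ)

/-- The Dyck (inclusion) order: every prefix height of `P` is at most that of `Q`. -/
def dyckLE (P Q : List Bool) : Prop := ∀ j, prefHeight P j ≤ prefHeight Q j

/-- Strict version of a relation `le`. -/
def ltOf (le : List Bool → List Bool → Prop) (P Q : List Bool) : Prop :=
  le P Q ∧ ¬ le Q P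

/-- There is a strict chain `P = c 0 < c 1 < ⋯ < c k = Q` inside `S`. -/
def HasChainIn (S : Set (List Bool)) (le : List Bool → List Bool → Prop)
    (P Q : List Bool) (k : ℕ) : Prop :=
  ∃ c : ℕ → List Bool, c 0 = P ∧ c k = Q ∧ (∀ i ≤ k, c i ∈ S) ∧
    ∀ i < k, ltOf le (c i) (c (i + 1))

/-- The interval `[P,Q]` of the poset `(S, le)` has height `k`: `k` is the maximal
length of a chain from `P` to `Q`. -/
def IntervalHeight (S : Set (List Bool)) (le : List Bool → List Bool → Prop)
    (P Q : List Bool) (k : ℕ) : Prop :=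
  HasChainIn S le P Q k ∧ ∀ m, HasChainIn S le P Q m → m ≤ k

/-- The interval `[P,Q]` of the poset `(S, le)` is linear: it is totally ordered. -/
def LinearInterval (S : Set (List Bool)) (le : List Bool → List Bool → Prop)
    (P Q : List Bool) : Prop :=
  P ∈ S ∧ Q ∈ S ∧ le P Q ∧
  ∀ R R', R ∈ S → R' ∈ S → le P R → le R Q → le P R' → le R' Q → le R R' ∨ le R' R

/-- `Q` covers `P` in the poset `(S, le)`. -/
def CovIn (S : Set (List Bool)) (le : List Bool → List Bool → Prop)
    (P Q : List Bool) : Prop :=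
  P ∈ S ∧ Q ∈ S ∧ ltOf le P Q ∧ ∀ R ∈ S, ¬ (ltOf le P R ∧ ltOf le R Q)

/-- The number of valleys (factors `du`) of `w`. -/
def valleys (w : List Bool) : ℕ :=
  ((List.range w.length).filter fun q => !w.getD q true && w.getD (q + 1) false).length

/-!
Read from an up step `u_i`, a word only sees the increment function `δ` shifted by `i - 1`, so
`ℓ_i` is the first return to `0` of the altitude of the suffix starting at `u_i`.  As the altitude
drops by at most one per letter, this is also the first time at which it is nonpositive.

A rotation `A d C B ↦ A C d B` delays a down step, hence raises altitudes pointwise; this settles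
the up steps of `A`.  Each up step of the excursion `C` returns inside `C`, so its excursion is
unaffected, and its position decreases by one.  The suffixes read by the up steps of `B` do not
change.
-/

/-- The increment function seen by a suffix that is preceded by `k` up steps. -/
def shiftInc (δ : ℕ → ℤ) (k : ℕ) : ℕ → ℤ := fun j => δ (k + j)

/-- The δ-altitude reached by `w` after `m` letters.  Like `stepVal`, it treats the positions
beyond the end of `w` as down steps. -/
def altitude (δ : ℕ → ℤ) (w : List Bool) (m : ℕ) : ℤ := elev δ w 0 m

/-- The first positive time at which the δ-altitude of `w` is zero.  For a word starting with an
up step this is the length of the δ-excursion of that step. -/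
noncomputable def firstReturn (δ : ℕ → ℤ) (w : List Bool) : ℕ :=
  sInf {m | 0 < m ∧ altitude δ w m = 0}

theorem shiftInc_nonneg {δ : ℕ → ℤ} (hδ : ∀ j, 0 ≤ δ j) (k j : ℕ) : 0 ≤ shiftInc δ k j :=
  hδ (k + j)

theorem shiftInc_shiftInc (δ : ℕ → ℤ) (a b : ℕ) :
    shiftInc (shiftInc δ a) b = shiftInc δ (a + b) := by
  ext j
  simp only [shiftInc, add_assoc]

theorem exists_eq_zero_of_sub_one_le {f : ℕ → ℤ} (hf : ∀ k, f k - 1 ≤ f (k + 1)) {a m : ℕ}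
    (ha : 0 ≤ f a) (ham : a ≤ m) (hm : f m ≤ 0) : ∃ k, a ≤ k ∧ k ≤ m ∧ f k = 0 := by
  induction m, ham using Nat.le_induction with
  | base => exact ⟨a, le_rfl, le_rfl, le_antisymm hm ha⟩
  | succ m ham ih =>
    rcases le_or_gt (f m) 0 with hneg | hpos
    · obtain ⟨k, hak, hkm, hk⟩ := ih hneg
      exact ⟨k, hak, hkm.trans m.le_succ, hk⟩
    · exact ⟨m + 1, ham.trans m.le_succ, le_rfl, by linarith [hf m]⟩

theorem exists_eq_append_true_cons {w : List Bool} {k : ℕ} (hk : k < w.count true) :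
    ∃ X Y, w = X ++ true :: Y ∧ X.count true = k := by
  induction w generalizing k with
  | nil => simp at hk
  | cons x w ih =>
    match x, k with
    | true, 0 => exact ⟨[], w, rfl, rfl⟩
    | true, k + 1 =>
      obtain ⟨X, Y, rfl, hX⟩ := ih (by simpa using hk)
      exact ⟨true :: X, Y, rfl, by simp [hX]⟩
    | false, k =>
      obtain ⟨X, Y, rfl, hX⟩ := ih (by simpa using hk)
      exact ⟨false :: X, Y, rfl, by simp [hX]⟩

theorem getElem?_filter_range_append_true_cons (X Y : List Bool) :
    ((List.range (X ++ true :: Y).length).filter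
      fun q => (X ++ true :: Y).getD q false = true)[X.count true]? = some X.length := by
  induction X with
  | nil => simp [List.range_succ_eq_map]
  | cons x X ih =>
    cases x <;> simpa [List.range_succ_eq_map, List.filter_map, Function.comp_def] using ih

theorem upPos_eq_length {w X Y : List Bool} {k : ℕ} (hw : w = X ++ true :: Y)
    (hk : X.count true = k) : upPos w (k + 1) = X.length := by
  subst hw hk
  rw [upPos, Nat.add_sub_cancel, List.getD_eq_getElem?_getD,
    getElem?_filter_range_append_true_cons, Option.getD_some]

section Altitude

variable {δ : ℕ → ℤ}

theorem stepVal_append_left {A B : List Bool} {q : ℕ} (hq : q < A.length) :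
    stepVal δ (A ++ B) q = stepVal δ A q := by
  rw [stepVal, stepVal, List.getD_append _ _ _ _ hq, List.take_append_of_le_length hq]

theorem stepVal_append_right (A B : List Bool) (q : ℕ) :
    stepVal δ (A ++ B) (A.length + q) = stepVal (shiftInc δ (A.count true)) B q := by
  rw [stepVal, stepVal, List.getD_append_right _ _ _ _ (Nat.le_add_right _ _),
    Nat.add_sub_cancel_left, add_assoc, List.take_length_add_append, List.count_append, shiftInc]

theorem neg_one_le_stepVal (hδ : ∀ j, 0 ≤ δ j) (w : List Bool) (q : ℕ) : -1 ≤ stepVal δ w q := by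
  unfold stepVal
  split
  · exact (by norm_num : (-1 : ℤ) ≤ 0).trans (hδ _)
  · rfl

theorem elev_append_right (A B : List Bool) (m : ℕ) :
    elev δ (A ++ B) A.length (A.length + m) = altitude (shiftInc δ (A.count true)) B m := by
  simp only [altitude, elev, Finset.sum_Ico_eq_sum_range, Nat.add_sub_cancel_left,
    stepVal_append_right, Nat.sub_zero, zero_add]

theorem altitude_zero (w : List Bool) : altitude δ w 0 = 0 := rfl

theorem altitude_succ (w : List Bool) (m : ℕ) :
    altitude δ w (m + 1) = altitude δ w m + stepVal δ w m :=
  Finset.sum_Ico_succ_top m.zero_le _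

theorem altitude_append_left {A B : List Bool} {m : ℕ} (hm : m ≤ A.length) :
    altitude δ (A ++ B) m = altitude δ A m :=
  Finset.sum_congr rfl fun _ hq => stepVal_append_left ((Finset.mem_Ico.1 hq).2.trans_le hm)

theorem altitude_append_right (A B : List Bool) (m : ℕ) :
    altitude δ (A ++ B) (A.length + m) =
      altitude δ A A.length + altitude (shiftInc δ (A.count true)) B m := by
  rw [← elev_append_right, ← altitude_append_left (B := B) le_rfl]
  exact (Finset.sum_Ico_consecutive _ A.length.zero_le (Nat.le_add_right _ _)).symm

theorem altitude_cons_succ (x : Bool) (w : List Bool) (m : ℕ) :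
    altitude δ (x :: w) (m + 1) =
      altitude δ [x] 1 + altitude (shiftInc δ ([x].count true)) w m := by
  rw [add_comm m]
  exact altitude_append_right [x] w m

theorem altitude_false_cons_succ (w : List Bool) (m : ℕ) :
    altitude δ (false :: w) (m + 1) = altitude δ w m - 1 := by
  have hdown : altitude δ [false] 1 = -1 := by simp [altitude_succ, altitude_zero, stepVal]
  have hshift : shiftInc δ ([false].count true) = δ := by ext j; simp [shiftInc]
  rw [altitude_cons_succ, hdown, hshift, neg_add_eq_sub]

theorem altitude_length_add (w : List Bool) (t : ℕ) :
    altitude δ w (w.length + t) = altitude δ w w.length - t := by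
  have hnil : altitude (shiftInc δ (w.count true)) [] t = -t := by simp [altitude, elev, stepVal]
  simpa [hnil, ← sub_eq_add_neg] using altitude_append_right (δ := δ) w [] t

theorem altitude_append_mono {A B B' : List Bool}
    (h : ∀ m, altitude (shiftInc δ (A.count true)) B m ≤
      altitude (shiftInc δ (A.count true)) B' m) (m : ℕ) :
    altitude δ (A ++ B) m ≤ altitude δ (A ++ B') m := by
  rcases le_total m A.length with hm | hm
  · rw [altitude_append_left hm, altitude_append_left hm]
  · obtain ⟨r, rfl⟩ := Nat.exists_eq_add_of_le hm
    rw [altitude_append_right, altitude_append_right]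
    exact add_le_add_right (h r) _

theorem altitude_false_cons_append_le (hδ : ∀ j, 0 ≤ δ j) (C B : List Bool) (m : ℕ) :
    altitude δ (false :: (C ++ B)) m ≤ altitude δ (C ++ false :: B) m := by
  induction C generalizing δ m with
  | nil => rfl
  | cons x C ih =>
    match m with
    | 0 => rfl
    | 1 =>
      have hx := neg_one_le_stepVal hδ (x :: (C ++ false :: B)) 0
      simpa [altitude_succ, altitude_zero, stepVal] using hx
    | m + 2 =>
      rw [List.cons_append, List.cons_append, altitude_cons_succ x _ (m + 1)]
      calc altitude δ (false :: x :: (C ++ B)) (m + 2)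
          = altitude δ [x] 1 +
              altitude (shiftInc δ ([x].count true)) (false :: (C ++ B)) (m + 1) := by
            rw [altitude_false_cons_succ, altitude_false_cons_succ, altitude_cons_succ]
            ring
        _ ≤ altitude δ [x] 1 +
              altitude (shiftInc δ ([x].count true)) (C ++ false :: B) (m + 1) :=
            add_le_add_right (ih (shiftInc_nonneg hδ _) (m + 1)) _

end Altitude

section FirstReturn

variable {δ : ℕ → ℤ}

theorem excLen_eq_firstReturn {w X Y : List Bool} {k : ℕ} (hw : w = X ++ true :: Y)
    (hk : X.count true = k) : excLen δ w (k + 1) = firstReturn (shiftInc δ k) (true :: Y) := by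
  simp only [excLen, firstReturn, upPos_eq_length hw hk]
  subst hw hk
  simp only [elev_append_right]

theorem exists_altitude_eq_zero (hδ : ∀ j, 0 ≤ δ j) {w : List Bool} {m : ℕ} (hm : 0 < m)
    (h : altitude δ (true :: w) m ≤ 0) : ∃ k, 0 < k ∧ k ≤ m ∧ altitude δ (true :: w) k = 0 := by
  refine exists_eq_zero_of_sub_one_le (fun k => ?_) ?_ hm h
  · rw [altitude_succ, sub_eq_add_neg]
    exact add_le_add_right (neg_one_le_stepVal hδ _ k) _
  · simpa [altitude_succ, altitude_zero, stepVal] using hδ 1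

theorem firstReturn_le (hδ : ∀ j, 0 ≤ δ j) {w : List Bool} {m : ℕ} (hm : 0 < m)
    (h : altitude δ (true :: w) m ≤ 0) : firstReturn δ (true :: w) ≤ m := by
  obtain ⟨k, hk, hkm, hk0⟩ := exists_altitude_eq_zero hδ hm h
  have hmem : k ∈ {m | 0 < m ∧ altitude δ (true :: w) m = 0} := ⟨hk, hk0⟩
  exact (Nat.sInf_le hmem).trans hkm

theorem firstReturn_spec (hδ : ∀ j, 0 ≤ δ j) (w : List Bool) :
    0 < firstReturn δ (true :: w) ∧ altitude δ (true :: w) (firstReturn δ (true :: w)) = 0 := by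
  have hdesc := altitude_length_add (δ := δ) (true :: w)
    (altitude δ (true :: w) (true :: w).length).toNat
  obtain ⟨k, hk, -, hk0⟩ := exists_altitude_eq_zero hδ
    (Nat.add_pos_left (List.length_pos_of_ne_nil (List.cons_ne_nil _ _)) _)
    (hdesc.trans_le (sub_nonpos.2 (Int.self_le_toNat _)))
  exact Nat.sInf_mem (s := {m | 0 < m ∧ altitude δ (true :: w) m = 0}) ⟨k, hk, hk0⟩

theorem firstReturn_mono (hδ : ∀ j, 0 ≤ δ j) {v w : List Bool}
    (h : ∀ m, altitude δ (true :: v) m ≤ altitude δ (true :: w) m) :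
    firstReturn δ (true :: v) ≤ firstReturn δ (true :: w) := by
  obtain ⟨hpos, hzero⟩ := firstReturn_spec hδ w
  exact firstReturn_le hδ hpos ((h _).trans_eq hzero)

theorem firstReturn_true_cons_append (hδ : ∀ j, 0 ≤ δ j) {C : List Bool}
    (hC : altitude δ (true :: C) (true :: C).length ≤ 0) (B : List Bool) :
    firstReturn δ (true :: (C ++ B)) = firstReturn δ (true :: C) := by
  have hagree {m : ℕ} (hm : m ≤ (true :: C).length) :
      altitude δ (true :: (C ++ B)) m = altitude δ (true :: C) m :=
    altitude_append_left (A := true :: C) hm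
  obtain ⟨hpos, hzero⟩ := firstReturn_spec hδ C
  obtain ⟨hpos', hzero'⟩ := firstReturn_spec hδ (C ++ B)
  have hle : firstReturn δ (true :: C) ≤ (true :: C).length := firstReturn_le hδ (by simp) hC
  have hle' : firstReturn δ (true :: (C ++ B)) ≤ firstReturn δ (true :: C) :=
    firstReturn_le hδ hpos ((hagree hle).trans hzero).le
  refine hle'.antisymm (firstReturn_le hδ hpos' ?_)
  rw [← hagree (hle'.trans hle), hzero']

end FirstReturn

section Rotation

variable {δ : ℕ → ℤ}

theorem IsDeltaExcAt.exists_true_cons_firstReturn_eq_length (hδ : ∀ j, 0 ≤ δ j) {X C B : List Bool}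
    (h : IsDeltaExcAt δ (X ++ (C ++ B)) X.length C) :
    ∃ C', C = true :: C' ∧
      firstReturn (shiftInc δ (X.count true)) (true :: C') = (true :: C').length := by
  obtain ⟨hup, m, hm, hmlen, hC, hzero, hmin⟩ := h
  have hlen : C.length = m := by
    rw [hC, List.length_take, List.length_drop]
    omega
  have helev {k : ℕ} (hk : k ≤ m) : elev δ (X ++ (C ++ B)) X.length (X.length + k) =
      altitude (shiftInc δ (X.count true)) C k := by
    rw [elev_append_right, altitude_append_left (hk.trans_eq hlen.symm)]
  obtain ⟨x, C', rfl⟩ := List.exists_cons_of_length_pos (hm.trans_eq hlen.symm)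
  obtain rfl : x = true := by simpa [List.getD_append_right] using hup
  refine ⟨C', rfl, ?_⟩
  obtain ⟨hpos, hreturn⟩ := firstReturn_spec (shiftInc_nonneg hδ (X.count true)) C'
  have hle : firstReturn (shiftInc δ (X.count true)) (true :: C') ≤ m :=
    firstReturn_le (shiftInc_nonneg hδ _) hm ((helev le_rfl).symm.trans hzero).le
  rw [hlen]
  exact hle.antisymm (not_lt.1 fun hlt => hmin _ hpos hlt ((helev hle).trans hreturn))

theorem altitude_suffix_nonpos_of_firstReturn_eq_length (hδ : ∀ j, 0 ≤ δ j) {C C₁ C₂ : List Bool}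
    (hsplit : true :: C = C₁ ++ C₂)
    (hreturn : firstReturn δ (true :: C) = (true :: C).length) :
    altitude (shiftInc δ (C₁.count true)) C₂ C₂.length ≤ 0 := by
  have hzero : altitude δ (C₁ ++ C₂) (C₁.length + C₂.length) = 0 := by
    rw [← hsplit, ← List.length_append, ← hsplit, ← hreturn]
    exact (firstReturn_spec hδ C).2
  rw [altitude_append_right] at hzero
  by_contra! hpos
  have hneg : altitude δ C₁ C₁.length < 0 := by linarith
  have hC₁ : 0 < C₁.length :=
    Nat.pos_of_ne_zero fun hnil => by simp [hnil, altitude_zero] at hneg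
  have hle : (true :: C).length ≤ C₁.length := by
    rw [← hreturn]
    refine firstReturn_le hδ hC₁ ?_
    rw [hsplit, altitude_append_left le_rfl]
    exact hneg.le
  have hC₂ : C₂.length = 0 := by
    rw [hsplit, List.length_append] at hle
    omega
  rw [hC₂, altitude_zero] at hpos
  exact lt_irrefl _ hpos

theorem IsDeltaExcAt.firstReturn_suffix_append (hδ : ∀ j, 0 ≤ δ j) {X C₁ C₂ B : List Bool}
    (h : IsDeltaExcAt δ (X ++ ((C₁ ++ true :: C₂) ++ B)) X.length (C₁ ++ true :: C₂))
    (D : List Bool) :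
    firstReturn (shiftInc δ (X.count true + C₁.count true)) (true :: (C₂ ++ D)) =
      firstReturn (shiftInc δ (X.count true + C₁.count true)) (true :: C₂) := by
  obtain ⟨C, hsplit, hreturn⟩ := h.exists_true_cons_firstReturn_eq_length hδ
  rw [← shiftInc_shiftInc]
  refine firstReturn_true_cons_append (shiftInc_nonneg (shiftInc_nonneg hδ _) _) ?_ D
  exact altitude_suffix_nonpos_of_firstReturn_eq_length (shiftInc_nonneg hδ _) hsplit.symm
    hreturn

theorem firstReturn_append_false_cons_le (hδ : ∀ j, 0 ≤ δ j) (Y C B : List Bool) :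
    firstReturn δ (true :: (Y ++ false :: (C ++ B))) ≤
      firstReturn δ (true :: (Y ++ (C ++ false :: B))) :=
  firstReturn_mono hδ (altitude_append_mono (A := true :: Y)
    (altitude_false_cons_append_le (shiftInc_nonneg hδ _) C B))

theorem DeltaRot.count_true_eq {P Q : List Bool} (h : DeltaRot δ P Q) :
    Q.count true = P.count true := by
  obtain ⟨A, C, B, rfl, rfl, -⟩ := h
  simp

theorem upPos_le_and_excLen_le_of_split {P Q X X' Y Y' : List Bool} {k : ℕ}
    (hP : P = X ++ true :: Y) (hQ : Q = X' ++ true :: Y')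
    (hX : X.count true = k) (hX' : X'.count true = k) (hlen : X'.length ≤ X.length)
    (hreturn : firstReturn (shiftInc δ k) (true :: Y) ≤ firstReturn (shiftInc δ k) (true :: Y')) :
    upPos Q (k + 1) ≤ upPos P (k + 1) ∧ excLen δ P (k + 1) ≤ excLen δ Q (k + 1) := by
  rw [upPos_eq_length hP hX, upPos_eq_length hQ hX', excLen_eq_firstReturn hP hX,
    excLen_eq_firstReturn hQ hX']
  exact ⟨hlen, hreturn⟩

theorem DeltaRot.upPos_le_and_excLen_le (hδ : ∀ j, 0 ≤ δ j) {P Q : List Bool}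
    (h : DeltaRot δ P Q) {k : ℕ} (hk : k < P.count true) :
    upPos Q (k + 1) ≤ upPos P (k + 1) ∧ excLen δ P (k + 1) ≤ excLen δ Q (k + 1) := by
  obtain ⟨A, C, B, rfl, rfl, hexc⟩ := h
  rcases lt_or_ge k (A.count true) with hA | hA
  · obtain ⟨X, Y, rfl, hX⟩ := exists_eq_append_true_cons hA
    exact upPos_le_and_excLen_le_of_split (X := X) (X' := X) (by simp) (by simp) hX hX le_rfl
      (firstReturn_append_false_cons_le (shiftInc_nonneg hδ k) Y C B)
  obtain ⟨j, rfl⟩ := Nat.exists_eq_add_of_le hA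
  rcases lt_or_ge j (C.count true) with hC | hC
  · obtain ⟨X, Y, rfl, rfl⟩ := exists_eq_append_true_cons hC
    have hexc' : IsDeltaExcAt δ ((A ++ [false]) ++ ((X ++ true :: Y) ++ B))
        (A ++ [false]).length (X ++ true :: Y) := by simpa using hexc
    have hreturn (D : List Bool) :
        firstReturn (shiftInc δ (A.count true + X.count true)) (true :: (Y ++ D)) =
          firstReturn (shiftInc δ (A.count true + X.count true)) (true :: Y) := by
      simpa using hexc'.firstReturn_suffix_append hδ D
    exact upPos_le_and_excLen_le_of_split (X := A ++ false :: X) (X' := A ++ X) (by simp)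
      (by simp) (by simp) (by simp) (by simp) ((hreturn B).trans (hreturn (false :: B)).symm).le
  · obtain ⟨l, rfl⟩ := Nat.exists_eq_add_of_le hC
    have hB : l < B.count true := by
      simp only [List.count_append, List.count_cons_of_ne (by decide : false ≠ true)] at hk
      omega
    obtain ⟨X, Y, rfl, rfl⟩ := exists_eq_append_true_cons hB
    exact upPos_le_and_excLen_le_of_split (X := A ++ false :: (C ++ X))
      (X' := A ++ (C ++ false :: X)) (Y := Y) (Y' := Y) (by simp) (by simp) (by simp) (by simp)
      (by simp [add_assoc]) le_rfl

end Rotation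

theorem stmt9_general {δ : ℕ → ℤ} (hδ : ∀ j, 0 ≤ δ j) {P Q : List Bool} (hPQ : altLE δ P Q)
    {i : ℕ} (h1 : 1 ≤ i) (hi : i ≤ P.count true) :
    hpos Q i ≤ hpos P i ∧ excLen δ P i ≤ excLen δ Q i := by
  obtain ⟨k, rfl⟩ := Nat.exists_eq_add_of_le' h1
  induction hPQ using Relation.ReflTransGen.head_induction_on with
  | refl => exact ⟨le_rfl, le_rfl⟩
  | head hrot _ ih =>
    obtain ⟨hpos_le, hexc_le⟩ := hrot.upPos_le_and_excLen_le hδ hi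
    obtain ⟨ihpos, ihexc⟩ := ih (hi.trans_eq hrot.count_true_eq.symm)
    exact ⟨ihpos.trans (Nat.succ_le_succ hpos_le), hexc_le.trans ihexc⟩

/-- along the alt-Tamari order, the positions `h_i` weakly decrease and
the δ-excursion lengths `ℓ_i` weakly increase. -/
theorem stmt9 (n : ℕ) (δ : ℕ → ℤ) (hδ : IsIncFun δ) (P Q : List Bool)
    (hP : IsDyckWord n P) (hQ : IsDyckWord n Q) (hPQ : altLE δ P Q) :
    ∀ i, 1 ≤ i → i ≤ n → hpos Q i ≤ hpos P i ∧ excLen δ P i ≤ excLen δ Q i := by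
  intro i h1 hi
  exact stmt9_general (fun j => by rcases hδ j with h | h <;> simp [h]) hPQ h1 (hP.1.symm ▸ hi)
end

section
/- Let δ be an increment function of size n and P a Dyck word of size n such that the up step u_j lies in the δ-excursion of the up step u_i. Then for every Q with P ≤ Q in the alt-Tamari poset Tam^δ_n, the up step u_j lies in the δ-excursion of u_i in Q. -/
/-!
Record a word by the δ-altitudes `a k` at which its up steps `u_k` start. Since down steps
lower the altitude by one and up steps never lower it, `u_j` lies in the δ-excursion of `u_i` iff
`i ≤ j` and `a i < a k` whenever `i < k ≤ j`; this relation on indices is transitive. The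
δ-rotation at `u_m` adds one to `a k` exactly for the `u_k` in the δ-excursion of `u_m`. The
inequality `a i < a k` could then only fail if `u_i` is raised and `u_k` is not; but `u_k` is in the
δ-excursion of `u_i`, so by transitivity it is raised along with `u_i`.
-/

/-- The function `a` stays strictly above its value at `i` on the whole interval `(i, j]`. With `a`
the altitudes of the up steps, this encodes membership of `u_j` in the δ-excursion of `u_i`. -/
def StaysAbove {ι α : Type*} [Preorder ι] [LT α] (a : ι → α) (i j : ι) : Prop :=
  i ≤ j ∧ ∀ k, i < k → k ≤ j → a i < a k

namespace StaysAbove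

variable {ι α : Type*}

theorem mono_right [Preorder ι] [LT α] {a : ι → α} {i j k : ι} (h : StaysAbove a i j)
    (hik : i ≤ k) (hkj : k ≤ j) : StaysAbove a i k :=
  ⟨hik, fun l hil hlk => h.2 l hil (hlk.trans hkj)⟩

variable [LinearOrder ι] {i j k m : ι}

theorem trans [Preorder α] {a : ι → α} (hij : StaysAbove a i j) (hjk : StaysAbove a j k) :
    StaysAbove a i k := by
  refine ⟨hij.1.trans hjk.1, fun l hil hlk => ?_⟩
  rcases le_or_gt l j with hlj | hjl
  · exact hij.2 l hil hlj
  · have hj : a j < a l := hjk.2 l hjl hlk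
    rcases hij.1.eq_or_lt with rfl | hlt
    · exact hj
    · exact (hij.2 j hlt le_rfl).trans hj

theorem of_raise [AddCommMonoid α] [PartialOrder α] [IsOrderedCancelAddMonoid α] {a b : ι → α}
    [DecidablePred (StaysAbove a m)] {c : α} (hc : 0 ≤ c)
    (hb : ∀ k, i ≤ k → k ≤ j → b k = a k + if StaysAbove a m k then c else 0)
    (h : StaysAbove a i j) : StaysAbove b i j := by
  refine ⟨h.1, fun k hik hkj => ?_⟩
  have hlt : a i < a k := h.2 k hik hkj
  rw [hb i le_rfl h.1, hb k hik.le hkj]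
  by_cases hmi : StaysAbove a m i
  · have hmk : StaysAbove a m k := hmi.trans (h.mono_right hik.le hkj)
    simpa only [if_pos hmi, if_pos hmk] using add_lt_add_left hlt c
  · rw [if_neg hmi, add_zero]
    exact lt_add_of_lt_of_nonneg hlt (by split_ifs <;> simp only [hc, le_refl])

end StaysAbove

theorem exists_eq_of_forall_le_succ_add_one {f : ℕ → ℤ} (hf : ∀ n, f n ≤ f (n + 1) + 1)
    {a b : ℕ} {c : ℤ} (hab : a ≤ b) (ha : c ≤ f a) (hb : f b ≤ c) :
    ∃ r, a ≤ r ∧ r ≤ b ∧ f r = c := by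
  induction b, hab using Nat.le_induction with
  | base => exact ⟨a, le_rfl, le_rfl, le_antisymm hb ha⟩
  | succ b hab ih =>
    by_cases hfb : f b ≤ c
    · obtain ⟨r, har, hrb, hr⟩ := ih hfb
      exact ⟨r, har, hrb.trans b.le_succ, hr⟩
    · exact ⟨b + 1, by omega, le_rfl, by have := hf b; omega⟩

section UpSteps

variable {v w : List Bool} {i j k p q : ℕ}

/-- The increasing list of the (0-based) positions of the up steps of `w`; its entries are the
values of `upPos w`. -/
def upPositions (w : List Bool) : List ℕ :=
  (List.range w.length).filter fun q => w.getD q false = true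

theorem upPositions_append (v w : List Bool) :
    upPositions (v ++ w) = upPositions v ++ (upPositions w).map (v.length + ·) := by
  unfold upPositions
  rw [List.length_append, List.range_add, List.filter_append, List.filter_map]
  congr 1
  · refine List.filter_congr fun q hq => ?_
    rw [List.getD_append _ _ _ _ (List.mem_range.1 hq)]
  · congr 1
    refine List.filter_congr fun q _ => ?_
    simp only [Function.comp_apply, List.getD_append_right _ _ _ _ (Nat.le_add_right _ _),
      Nat.add_sub_cancel_left]

theorem length_upPositions (w : List Bool) : (upPositions w).length = w.count true := by
  induction w with
  | nil => rfl
  | cons b w ih =>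
    rw [← List.singleton_append, upPositions_append, List.length_append, List.length_map, ih,
      List.count_append]
    cases b <;> rfl

theorem upPos_mem_upPositions (hk : 1 ≤ k) (hkw : k ≤ w.count true) :
    upPos w k ∈ upPositions w := by
  have hlt : k - 1 < (upPositions w).length := by rw [length_upPositions]; omega
  change (upPositions w).getD (k - 1) 0 ∈ _
  rw [List.getD_eq_getElem _ _ hlt]
  exact List.getElem_mem hlt

theorem upPos_lt_length (hk : 1 ≤ k) (hkw : k ≤ w.count true) : upPos w k < w.length :=
  List.mem_range.1 (List.mem_filter.1 (upPos_mem_upPositions hk hkw)).1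

theorem getD_upPos (hk : 1 ≤ k) (hkw : k ≤ w.count true) : w.getD (upPos w k) false = true :=
  of_decide_eq_true (List.mem_filter.1 (upPos_mem_upPositions hk hkw)).2

theorem upPos_append_left (hk : 1 ≤ k) (hkv : k ≤ v.count true) :
    upPos (v ++ w) k = upPos v k := by
  change (upPositions (v ++ w)).getD (k - 1) 0 = (upPositions v).getD (k - 1) 0
  rw [upPositions_append, List.getD_append _ _ _ _ (by rw [length_upPositions]; omega)]

theorem upPos_append_right (hk : 1 ≤ k) (hkw : k ≤ w.count true) :
    upPos (v ++ w) (v.count true + k) = v.length + upPos w k := by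
  have hlt : k - 1 < (upPositions w).length := by rw [length_upPositions]; omega
  change (upPositions (v ++ w)).getD (v.count true + k - 1) 0 =
    v.length + (upPositions w).getD (k - 1) 0
  rw [upPositions_append,
    List.getD_append_right _ _ _ _ (by rw [length_upPositions]; omega), length_upPositions,
    show v.count true + k - 1 - v.count true = k - 1 by omega, List.getD_eq_getElem _ _ hlt,
    List.getD_eq_getElem _ _ (by rwa [List.length_map]), List.getElem_map]

theorem upPos_false_cons (hk : 1 ≤ k) (hkw : k ≤ w.count true) :
    upPos (false :: w) k = upPos w k + 1 := by
  simpa [add_comm] using upPos_append_right (v := [false]) hk hkw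

theorem upPos_true_cons_one (w : List Bool) : upPos (true :: w) 1 = 0 :=
  upPos_append_left (v := [true]) le_rfl le_rfl

theorem upPos_true_cons_succ (hk : 1 ≤ k) (hkw : k ≤ w.count true) :
    upPos (true :: w) (k + 1) = upPos w k + 1 := by
  simpa [add_comm] using upPos_append_right (v := [true]) hk hkw

theorem le_upPos_iff (hk : 1 ≤ k) (hkw : k ≤ w.count true) :
    q ≤ upPos w k ↔ (w.take q).count true < k := by
  induction w generalizing k q with
  | nil => exact absurd (hk.trans hkw) (by simp)
  | cons b w ih =>
    rcases q with _ | q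
    · exact iff_of_true (Nat.zero_le _) hk
    cases b with
    | false =>
      have hkw' : k ≤ w.count true := by simpa using hkw
      simpa [upPos_false_cons hk hkw'] using ih hk hkw'
    | true =>
      obtain ⟨k, rfl⟩ := Nat.exists_eq_add_of_le' hk
      rcases k.eq_zero_or_pos with rfl | hk'
      · simp [upPos_true_cons_one]
      · have hkw' : k ≤ w.count true := by simpa using hkw
        simpa [upPos_true_cons_succ hk' hkw'] using ih hk' hkw'

theorem count_take_succ (w : List Bool) (q : ℕ) :
    (w.take (q + 1)).count true =
      (w.take q).count true + if w.getD q false = true then 1 else 0 := by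
  rw [List.take_add_one, List.count_append]
  rcases h : w[q]? with _ | _ | _ <;> simp [List.getD, h]

theorem count_take_mono (w : List Bool) : Monotone fun q => (w.take q).count true :=
  fun _ _ h => (List.take_sublist_take_left h).count_le true

theorem count_take_add_one_le (hp : w.getD p false = true) :
    (w.take p).count true + 1 ≤ w.count true := by
  have hle : (w.take (p + 1)).count true ≤ w.count true := (List.take_sublist _ _).count_le true
  rwa [count_take_succ, if_pos hp] at hle

theorem upPos_count_take_add_one (hp : w.getD p false = true) :
    upPos w ((w.take p).count true + 1) = p := by
  refine eq_of_forall_le_iff fun q => ?_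
  rw [le_upPos_iff (Nat.le_add_left _ _) (count_take_add_one_le hp), Nat.lt_succ_iff]
  refine ⟨fun h => ?_, fun h => count_take_mono w h⟩
  by_contra! hpq
  have hlt : (w.take (p + 1)).count true ≤ (w.take q).count true := count_take_mono w hpq
  rw [count_take_succ, if_pos hp] at hlt
  omega

theorem count_take_upPos_add_one (hk : 1 ≤ k) (hkw : k ≤ w.count true) :
    (w.take (upPos w k)).count true + 1 = k := by
  have hlt := (le_upPos_iff hk hkw).1 le_rfl
  have hge := not_lt.1 (mt (le_upPos_iff hk hkw).2 (upPos w k).lt_succ_self.not_ge)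
  rw [Nat.succ_eq_add_one, count_take_succ, if_pos (getD_upPos hk hkw)] at hge
  omega

theorem upPos_strictMonoOn (w : List Bool) : StrictMonoOn (upPos w) (Set.Icc 1 (w.count true)) := by
  rintro i ⟨hi, hiw⟩ j ⟨hj, hjw⟩ hij
  refine Nat.succ_le_iff.1 ((le_upPos_iff hj hjw).2 ?_)
  rwa [Nat.succ_eq_add_one, count_take_succ, if_pos (getD_upPos hi hiw),
    count_take_upPos_add_one hi hiw]

theorem upPos_moveDown (A C B : List Bool) (hk : 1 ≤ k)
    (hkP : k ≤ (A ++ false :: (C ++ B)).count true) :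
    upPos (A ++ false :: (C ++ B)) k = upPos (A ++ (C ++ false :: B)) k +
      if A.length + 1 ≤ upPos (A ++ false :: (C ++ B)) k ∧
        upPos (A ++ false :: (C ++ B)) k < A.length + 1 + C.length then 1 else 0 := by
  rcases le_or_gt k (A.count true) with hkA | hkA
  · have := upPos_lt_length hk hkA
    rw [upPos_append_left hk hkA, upPos_append_left hk hkA, if_neg (by omega), add_zero]
  obtain ⟨l, hl, rfl⟩ : ∃ l, 1 ≤ l ∧ k = A.count true + l := ⟨k - A.count true, by omega, by omega⟩
  have hlCB : l ≤ (C ++ B).count true := by simpa using hkP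
  rw [upPos_append_right hl (by simpa using hlCB),
    upPos_append_right hl (by simpa using hlCB), upPos_false_cons hl hlCB]
  rcases le_or_gt l (C.count true) with hlC | hlC
  · have := upPos_lt_length hl hlC
    rw [upPos_append_left hl hlC, upPos_append_left hl hlC, if_pos (by omega), add_assoc]
  · obtain ⟨r, hr, rfl⟩ : ∃ r, 1 ≤ r ∧ l = C.count true + r :=
      ⟨l - C.count true, by omega, by omega⟩
    have hrB : r ≤ B.count true := by simpa using hlCB
    rw [upPos_append_right hr hrB, upPos_append_right hr (by simpa using hrB),
      upPos_false_cons hr hrB, if_neg (by omega)]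
    omega

end UpSteps

section Elevation

variable {δ : ℕ → ℤ} {w : List Bool} {a b i j k p q : ℕ}

theorem elev_succ (δ : ℕ → ℤ) (w : List Bool) (hab : a ≤ b) :
    elev δ w a (b + 1) = elev δ w a b + stepVal δ w b :=
  Finset.sum_Ico_succ_top hab _

theorem elev_eq_sub (δ : ℕ → ℤ) (w : List Bool) (hab : a ≤ b) :
    elev δ w a b = elev δ w 0 b - elev δ w 0 a := by
  simpa only [elev, ← Finset.range_eq_Ico] using Finset.sum_Ico_eq_sub (stepVal δ w) hab

theorem elev_zero_eq (δ : ℕ → ℤ) (w : List Bool) (q : ℕ) :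
    elev δ w 0 q = ∑ l ∈ Finset.Ico 1 ((w.take q).count true + 1), δ l +
      (w.take q).count true - q := by
  induction q with
  | zero => simp [elev]
  | succ q ih =>
    rw [elev_succ δ w q.zero_le, ih, stepVal, count_take_succ]
    split_ifs
    · rw [Finset.sum_Ico_succ_top (by omega : 1 ≤ (w.take q).count true + 1)]
      push_cast
      ring
    · push_cast
      ring

theorem elev_le_elev_succ_add_one (hδ : ∀ l, 0 ≤ δ l) (w : List Bool) (q : ℕ) :
    elev δ w 0 q ≤ elev δ w 0 (q + 1) + 1 := by
  rw [elev_succ δ w q.zero_le, stepVal]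
  split_ifs
  · have := hδ ((w.take (q + 1)).count true)
    omega
  · omega

theorem elev_le_elev_succ_of_up (hδ : ∀ l, 0 ≤ δ l) (hp : w.getD p false = true) :
    elev δ w 0 p ≤ elev δ w 0 (p + 1) := by
  rw [elev_succ δ w p.zero_le, stepVal, if_pos hp]
  exact le_add_of_nonneg_right (hδ _)

theorem exists_ge_elev_le (δ : ℕ → ℤ) (w : List Bool) (N : ℕ) (c : ℤ) :
    ∃ b, N ≤ b ∧ elev δ w 0 b ≤ c := by
  -- `stepVal` reads every position beyond the end of `w` as a down step.
  set top : ℤ := ∑ l ∈ Finset.Ico 1 (w.count true + 1), δ l + w.count true with htop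
  refine ⟨N + w.length + (top - c).toNat, by omega, ?_⟩
  rw [elev_zero_eq, List.take_of_length_le (by omega), ← htop]
  omega

theorem exists_elev_eq_zero (hδ : ∀ l, 0 ≤ δ l) (hp : w.getD p false = true) (hpq : p < q)
    (hq : elev δ w 0 q ≤ elev δ w 0 p) :
    ∃ m, 0 < m ∧ p + m ≤ q ∧ elev δ w p (p + m) = 0 := by
  obtain ⟨r, hpr, hrq, hr⟩ := exists_eq_of_forall_le_succ_add_one
    (elev_le_elev_succ_add_one hδ w) hpq (elev_le_elev_succ_of_up hδ hp) hq
  refine ⟨r - p, by omega, by omega, ?_⟩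
  rw [Nat.add_sub_cancel' (by omega), elev_eq_sub δ w (by omega), hr, sub_self]

theorem isLeast_excLen (hδ : ∀ l, 0 ≤ δ l) (hi : 1 ≤ i) (hiw : i ≤ w.count true) :
    IsLeast {m | 0 < m ∧ elev δ w (upPos w i) (upPos w i + m) = 0} (excLen δ w i) := by
  obtain ⟨b, hib, hb⟩ := exists_ge_elev_le δ w (upPos w i + 1) (elev δ w 0 (upPos w i))
  obtain ⟨m, hm, -, hret⟩ := exists_elev_eq_zero hδ (getD_upPos hi hiw) hib hb
  exact ⟨Nat.sInf_mem ⟨m, hm, hret⟩, fun _ => Nat.sInf_le⟩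

theorem lt_add_excLen_iff (hδ : ∀ l, 0 ≤ δ l) (hi : 1 ≤ i) (hiw : i ≤ w.count true) :
    q < upPos w i + excLen δ w i ↔
      ∀ r, upPos w i < r → r ≤ q → elev δ w 0 (upPos w i) < elev δ w 0 r := by
  obtain ⟨⟨hpos, hzero⟩, hleast⟩ := isLeast_excLen hδ hi hiw
  constructor
  · intro hq r hir hrq
    by_contra! hle
    obtain ⟨m, hm, hmr, hret⟩ := exists_elev_eq_zero hδ (getD_upPos hi hiw) hir hle
    have hlen : excLen δ w i ≤ m := hleast ⟨hm, hret⟩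
    omega
  · intro h
    rw [elev_eq_sub δ w (Nat.le_add_right _ _), sub_eq_zero] at hzero
    by_contra! hle
    exact (h _ (by omega) hle).ne' hzero

/-- The δ-altitude at which the up step `u_k` of `w` starts. -/
def upAltitude (δ : ℕ → ℤ) (w : List Bool) (k : ℕ) : ℤ :=
  elev δ w 0 (upPos w k)

theorem upAltitude_eq (δ : ℕ → ℤ) (hk : 1 ≤ k) (hkw : k ≤ w.count true) :
    upAltitude δ w k = ∑ l ∈ Finset.Ico 1 k, δ l + (k - 1) - upPos w k := by
  have hcount := count_take_upPos_add_one hk hkw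
  have hcast : ((w.take (upPos w k)).count true : ℤ) = k - 1 := by omega
  rw [upAltitude, elev_zero_eq, hcount, hcast]

theorem exists_upAltitude_le (δ : ℕ → ℤ) (hi : 1 ≤ i) (hiw : i ≤ w.count true) (hj : 1 ≤ j)
    (hjw : j ≤ w.count true) (hiq : upPos w i < q) (hqj : q ≤ upPos w j) :
    ∃ k, i < k ∧ k ≤ j ∧ upAltitude δ w k ≤ elev δ w 0 q := by
  set k := (w.take q).count true + 1 with hk
  have hik : i < k := by
    by_contra! hki
    exact hiq.not_ge ((le_upPos_iff hi hiw).2 hki)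
  have hkj : k ≤ j := (le_upPos_iff hj hjw).1 hqj
  have hqk : q ≤ upPos w k := (le_upPos_iff (by omega) (hkj.trans hjw)).2 (Nat.lt_succ_self _)
  refine ⟨k, hik, hkj, ?_⟩
  rw [upAltitude_eq δ (by omega) (hkj.trans hjw), elev_zero_eq, ← hk]
  omega

/-- The up step `u_j` lies in the δ-excursion of the up step `u_i` in `w`. -/
def InExcursion (δ : ℕ → ℤ) (w : List Bool) (i j : ℕ) : Prop :=
  upPos w i ≤ upPos w j ∧ upPos w j < upPos w i + excLen δ w i

theorem inExcursion_iff_staysAbove (hδ : ∀ l, 0 ≤ δ l) (hi : 1 ≤ i) (hiw : i ≤ w.count true)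
    (hj : 1 ≤ j) (hjw : j ≤ w.count true) :
    InExcursion δ w i j ↔ StaysAbove (upAltitude δ w) i j := by
  have hmono := upPos_strictMonoOn w
  refine and_congr (hmono.le_iff_le ⟨hi, hiw⟩ ⟨hj, hjw⟩) ?_
  rw [lt_add_excLen_iff hδ hi hiw]
  constructor
  · intro h k hik hkj
    have hkw : k ∈ Set.Icc 1 (w.count true) := ⟨hi.trans hik.le, hkj.trans hjw⟩
    exact h _ (hmono ⟨hi, hiw⟩ hkw hik) (hmono.monotoneOn hkw ⟨hj, hjw⟩ hkj)
  · intro h r hir hrj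
    obtain ⟨k, hik, hkj, hle⟩ := exists_upAltitude_le δ hi hiw hj hjw hir hrj
    exact (h k hik hkj).trans_le hle

end Elevation

theorem IsDeltaExcAt.excLen_eq {δ : ℕ → ℤ} {w C : List Bool} {p : ℕ} (h : IsDeltaExcAt δ w p C) :
    excLen δ w ((w.take p).count true + 1) = C.length := by
  obtain ⟨hup, m, hm, hmw, rfl, hret, hfirst⟩ := h
  rw [List.length_take, List.length_drop, min_eq_left (by omega), excLen,
    upPos_count_take_add_one hup]
  refine IsLeast.csInf_eq ⟨⟨hm, hret⟩, fun m' ⟨hm', hret'⟩ => ?_⟩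
  by_contra! hlt
  exact hfirst m' hm' hlt hret'

namespace DeltaRot

variable {δ : ℕ → ℤ} {P Q : List Bool}

theorem count_true_eq_s10 (h : DeltaRot δ P Q) : Q.count true = P.count true := by
  obtain ⟨A, C, B, rfl, rfl, -⟩ := h
  simp

open Classical in
theorem exists_upAltitude_eq (h : DeltaRot δ P Q) :
    ∃ m, 1 ≤ m ∧ m ≤ P.count true ∧ ∀ k, 1 ≤ k → k ≤ P.count true →
      upAltitude δ Q k = upAltitude δ P k + if InExcursion δ P m k then 1 else 0 := by
  have hcount := h.count_true_eq_s10
  obtain ⟨A, C, B, hP, hQ, hexc⟩ := h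
  set m := (P.take (A.length + 1)).count true + 1 with hm
  have hmP : m ≤ P.count true := count_take_add_one_le hexc.1
  have hupPos : upPos P m = A.length + 1 := upPos_count_take_add_one hexc.1
  refine ⟨m, by omega, hmP, fun k hk hkP => ?_⟩
  have hmove : upPos P k = upPos Q k + if InExcursion δ P m k then 1 else 0 := by
    rw [InExcursion, hupPos, hexc.excLen_eq]
    subst hP hQ
    convert upPos_moveDown A C B hk hkP
  rw [upAltitude_eq δ hk hkP, upAltitude_eq δ hk (hcount ▸ hkP), hmove]
  push_cast
  ring

theorem inExcursion_mono (hδ : ∀ l, 0 ≤ δ l) (hrot : DeltaRot δ P Q) {i j : ℕ} (hi : 1 ≤ i)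
    (hiP : i ≤ P.count true) (hj : 1 ≤ j) (hjP : j ≤ P.count true) (h : InExcursion δ P i j) :
    InExcursion δ Q i j := by
  classical
  have hcount := hrot.count_true_eq_s10
  rw [inExcursion_iff_staysAbove hδ hi (by omega) hj (by omega)] at h ⊢
  obtain ⟨m, hm, hmP, hraise⟩ := hrot.exists_upAltitude_eq
  refine h.of_raise (m := m) zero_le_one fun k hik hkj => ?_
  simp only [hraise k (hi.trans hik) (hkj.trans hjP),
    inExcursion_iff_staysAbove hδ hm hmP (hi.trans hik) (hkj.trans hjP)]

end DeltaRot

theorem stmt10_general {δ : ℕ → ℤ} (hδ : ∀ l, 0 ≤ δ l) {P Q : List Bool} {i j : ℕ} (hi : 1 ≤ i)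
    (hiP : i ≤ P.count true) (hj : 1 ≤ j) (hjP : j ≤ P.count true) (h : InExcursion δ P i j)
    (hPQ : altLE δ P Q) : InExcursion δ Q i j := by
  induction hPQ using Relation.ReflTransGen.head_induction_on with
  | refl => exact h
  | head hrot _ ih =>
    have hcount := hrot.count_true_eq_s10
    exact ih (by omega) (by omega) (hrot.inExcursion_mono hδ hi hiP hj hjP h)

/-- if `u_j` lies in the δ-excursion of `u_i` in `P`, then this remains
true in every `Q ≥ P` in the alt-Tamari poset. -/
theorem stmt10 (n : ℕ) (δ : ℕ → ℤ) (hδ : IsIncFun δ) (P : List Bool)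
    (hP : IsDyckWord n P) (i j : ℕ) (hi1 : 1 ≤ i) (hin : i ≤ n)
    (hj1 : 1 ≤ j) (hjn : j ≤ n)
    (h : upPos P i ≤ upPos P j ∧ upPos P j < upPos P i + excLen δ P i) :
    ∀ Q : List Bool, altLE δ P Q →
      upPos Q i ≤ upPos Q j ∧ upPos Q j < upPos Q i + excLen δ Q i := by
  have hδ' : ∀ l, 0 ≤ δ l := fun l => (hδ l).elim (·.ge) fun h1 => h1 ▸ zero_le_one
  exact fun Q hPQ => stmt10_general hδ' hi1 (hP.1 ▸ hin) hj1 (hP.1 ▸ hjn) h hPQ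
end
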